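/- Let σ be a permutation of [n] and let f_σ be the unique subexcedant function on [n] with σ = (n f_σ(n)) ∘ ⋯ ∘ (2 f_σ(2)) ∘ (1 f_σ(1)), where (i j) denotes the transposition of i and j. Then σ is a derangement of [n] if and only if every fixed point of f_σ is multiple; that is, for every i with f_σ(i) = i there exists j > i with f_σ(j) = i. -/

import Mathlib

open Finset

/-- Number of inversions of a permutation of `Fin n`. -/
def inversions {n : ℕ} (π : Equiv.Perm (Fin n)) : ℕ :=
  (Finset.univ.filter fun p : Fin n × Fin n => p.1 < p.2 ∧ π p.2 < π p.1).card

/-- Excedance indices of a permutation. -/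
def EXCi {n : ℕ} (π : Equiv.Perm (Fin n)) : Finset (Fin n) :=
  Finset.univ.filter fun i => i < π i

/-- Excedance values of a permutation. -/
def EXCv {n : ℕ} (π : Equiv.Perm (Fin n)) : Finset (Fin n) :=
  (EXCi π).image π

/-- The permutation `(n f(n)) ∘ ⋯ ∘ (2 f(2)) ∘ (1 f(1))` associated to a
subexcedant function `f` (the transposition `(1 f(1))` is applied first). -/
def sefPerm {n : ℕ} (f : Fin n → Fin n) : Equiv.Perm (Fin n) :=
  ((List.ofFn fun i : Fin n => Equiv.swap i (f i)).reverse).prod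

/-!
Apply the transpositions `(i f(i))` one by one, in increasing order of `i`. When the turn of
`(a f(a))` comes, `a` is still fixed, because no earlier transposition moves it. Hence `a` is fixed
afterwards exactly when `f(a) = a`. An earlier point `x` is fixed afterwards exactly when it was
fixed before and `f(a) ≠ x`: to become fixed it would have to be mapped to `a`, but `a` itself
already is.
-/

section TranspositionProd

variable {α : Type*} [DecidableEq α]

/-- The permutation `(iₖ f(iₖ)) ∘ ⋯ ∘ (i₁ f(i₁))` for a list `l = [i₁, …, iₖ]`, which extends
`sefPerm` to arbitrary types and to partial products. As there, the transposition at the head of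
the list is applied first. -/
def transpositionProd (f : α → α) (l : List α) : Equiv.Perm α :=
  (l.map fun i => Equiv.swap i (f i)).reverse.prod

theorem sefPerm_eq_transpositionProd {n : ℕ} (f : Fin n → Fin n) :
    sefPerm f = transpositionProd f (List.finRange n) := by
  rw [sefPerm, transpositionProd, List.ofFn_eq_map]

theorem transpositionProd_concat (f : α → α) (l : List α) (a : α) :
    transpositionProd f (l ++ [a]) = Equiv.swap a (f a) * transpositionProd f l := by
  simp [transpositionProd]

theorem transpositionProd_apply_of_notMem {f : α → α} {l : List α} {x : α} (hx : x ∉ l)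
    (hfx : ∀ i ∈ l, f i ≠ x) : transpositionProd f l x = x := by
  induction l using List.reverseRecOn with
  | nil => rfl
  | append_singleton l a ih =>
    simp only [List.mem_append, List.mem_singleton, not_or] at hx hfx
    rw [transpositionProd_concat, Equiv.Perm.mul_apply, ih hx.1 fun i hi => hfx i (.inl hi),
      Equiv.swap_apply_of_ne_of_ne hx.2 (hfx a (.inr rfl)).symm]

theorem swap_mul_apply_eq_self_iff {σ : Equiv.Perm α} {a b x : α} (hσ : σ a = a) (hx : x ≠ a) :
    (Equiv.swap a b * σ) x = x ↔ σ x = x ∧ b ≠ x := by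
  have hσx : σ x ≠ a := fun h => hx (σ.injective (h.trans hσ.symm))
  rw [Equiv.Perm.mul_apply]
  by_cases hb : σ x = b
  · rw [hb, Equiv.swap_apply_right]
    exact iff_of_false hx.symm fun h => h.2 h.1
  · rw [Equiv.swap_apply_of_ne_of_ne hσx hb]
    exact ⟨fun h => ⟨h, fun hbx => hb (h.trans hbx.symm)⟩, And.left⟩

variable [Preorder α] {f : α → α} {l : List α}

theorem transpositionProd_apply_eq_self_iff (hl : l.SortedLT) (hf : ∀ i ∈ l, f i ≤ i) {x : α}
    (hx : x ∈ l) :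
    transpositionProd f l x = x ↔ f x = x ∧ ∀ j ∈ l, x < j → f j ≠ x := by
  induction l using List.reverseRecOn with
  | nil => simp at hx
  | append_singleton l a ih =>
    obtain ⟨hl', -, hlt⟩ := List.pairwise_append.mp hl.pairwise
    replace hlt : ∀ i ∈ l, i < a := fun i hi => hlt i hi a (List.mem_singleton_self a)
    simp only [List.forall_mem_append, List.forall_mem_singleton] at hf ⊢
    have ha : transpositionProd f l a = a :=
      transpositionProd_apply_of_notMem (fun h => (hlt a h).false)
        fun i hi => ((hf.1 i hi).trans_lt (hlt i hi)).ne
    rw [transpositionProd_concat]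
    rcases List.mem_append.mp hx with hxl | hxa
    · rw [swap_mul_apply_eq_self_iff ha (hlt x hxl).ne, ih hl'.sortedLT hf.1 hxl, and_assoc,
        forall_prop_of_true (hlt x hxl)]
    · obtain rfl := List.mem_singleton.mp hxa
      have hnone : ∀ j ∈ l, x < j → f j ≠ x := fun j hj hxj => absurd hxj (hlt j hj).asymm
      simpa [ha] using fun _ => hnone

theorem stmt16_general (hl : l.SortedLT) (hf : ∀ i ∈ l, f i ≤ i) :
    (∀ i ∈ l, transpositionProd f l i ≠ i) ↔
      ∀ i ∈ l, f i = i → ∃ j ∈ l, i < j ∧ f j = i := by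
  refine forall₂_congr fun i hi => ?_
  rw [Ne, transpositionProd_apply_eq_self_iff hl hf hi]
  push Not
  rfl

end TranspositionProd

theorem stmt16 (n : ℕ) (f : Fin n → Fin n) (hf : ∀ i, f i ≤ i) :
    (∀ i, sefPerm f i ≠ i) ↔ (∀ i, f i = i → ∃ j, i < j ∧ f j = i) := by
  simpa [sefPerm_eq_transpositionProd] using
    stmt16_general (List.sortedLT_finRange n) fun i _ => hf i
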